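/- Let G be a finite group of order v with a normal subgroup N of index 3, and let S ⊆ G be a (v,k,μ) sum set. If the three intersection numbers |S ∩ α| as α ranges over the three cosets of N in G are pairwise distinct, then 3 divides k, |S ∩ N| = k/3, and there exists a nonzero integer x with k² − μv = −3x². -/

import Mathlib

/-!
Counting, coset by coset, the pairs of `S × S` whose product lies in a given coset `q ≠ N`
(such a coset misses the identity, so each of its `|N|` elements is hit exactly `mu` times)
gives a convolution identity on the quotient `G ⧸ N`, a cyclic group of order 3; this is
`sum_cosetCount_mul`. Writing `a, b, c` for the intersection numbers of `S` with `N` and the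
two other cosets, the identities for the two nontrivial cosets read
`c² + 2ab = mu |N| = b² + 2ac`. Subtracting and cancelling `c - b ≠ 0` gives `b + c = 2a`, so
`k = a + b + c = 3a`, and substituting `c = 2a - b` into `k² - 3 mu |N|` leaves `-3 (a - b)²`.
-/


open scoped Pointwise

/-- The number of ways to write `g` as a product of two elements of `S`. -/
noncomputable def sumReps {G : Type*} [Group G] (S : Set G) (g : G) : ℕ :=
  Set.ncard {p : G × G | p.1 ∈ S ∧ p.2 ∈ S ∧ p.1 * p.2 = g}

/-- `S` is a `(v,k,λ,μ)` partial sum set: every nonidentity element of `S` has exactly `λ`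
representations as a product of two elements of `S`, and every nonidentity element outside
`S` has exactly `μ` such representations. -/
def IsPartialSumSet {G : Type*} [Group G] (S : Set G) (lam mu : ℕ) : Prop :=
  (∀ g ∈ S, g ≠ 1 → sumReps S g = lam) ∧ (∀ g : G, g ∉ S → g ≠ 1 → sumReps S g = mu)

/-- `S` is a `(v,k,μ)` sum set: every nonidentity element of `G` has exactly `μ`
representations as a product of two elements of `S`. -/
def IsSumSet {G : Type*} [Group G] (S : Set G) (mu : ℕ) : Prop :=
  ∀ g : G, g ≠ 1 → sumReps S g = mu

/-- The intersection number of `S` with the coset `α` of `N`. -/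
noncomputable def cosetCount {G : Type*} [Group G] (N : Subgroup G) (S : Set G)
    (α : G ⧸ N) : ℕ :=
  {s ∈ S | (s : G ⧸ N) = α}.ncard

lemma card_fiber_mk {G : Type*} [Group G] [Fintype G] (N : Subgroup G) [N.Normal]
    [DecidableEq (G ⧸ N)] (q : G ⧸ N) :
    (Finset.univ.filter fun g : G => (g : G ⧸ N) = q).card = Nat.card N := by
  have := QuotientGroup.card_preimage_mk N {q}
  rw [Nat.card_unique (α := ({q} : Set (G ⧸ N))), mul_one] at this
  rw [← this, Nat.card_coe_set_eq, ← Set.ncard_coe_finset]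
  congr 1
  ext; simp

lemma sum_cosetCount {G : Type*} [Group G] [Finite G] (N : Subgroup G)
    [Fintype (G ⧸ N)] (S : Set G) : ∑ r, cosetCount N S r = S.ncard := by
  classical
  have := Fintype.ofFinite G
  rw [Set.ncard_eq_toFinset_card', Finset.card_eq_sum_card_fiberwise
    (f := fun g : G => (g : G ⧸ N)) (t := Finset.univ) (by simp)]
  refine Finset.sum_congr rfl fun r _ => ?_
  rw [cosetCount, Set.ncard_eq_toFinset_card']
  congr 1
  ext; simp

/-- Double counting of the pairs in `S × S` whose product lies in a nontrivial coset `q`. -/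
lemma sum_cosetCount_mul {G : Type*} [Group G] [Finite G] (N : Subgroup G) [N.Normal]
    [Fintype (G ⧸ N)] (S : Set G) (mu : ℕ) (h : IsSumSet S mu) (q : G ⧸ N) (hq : q ≠ 1) :
    ∑ r, cosetCount N S r * cosetCount N S (r⁻¹ * q) = mu * Nat.card N := by
  classical
  have := Fintype.ofFinite G
  obtain ⟨F, hF⟩ : ∃ F : Finset (G × G),
      ∀ p, p ∈ F ↔ p.1 ∈ S ∧ p.2 ∈ S ∧ (p.1 : G ⧸ N) * p.2 = q :=
    ⟨Set.toFinset {p | p.1 ∈ S ∧ p.2 ∈ S ∧ (p.1 : G ⧸ N) * p.2 = q}, by simp⟩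
  have h1 : F.card = mu * Nat.card N := by
    rw [Finset.card_eq_sum_card_fiberwise (f := fun p => p.1 * p.2)
      (t := Finset.univ.filter fun g : G => (g : G ⧸ N) = q)
      (by intro p hp; simpa using ((hF p).mp hp).2.2)]
    rw [Finset.sum_congr rfl (g := fun _ => mu), Finset.sum_const, card_fiber_mk, smul_eq_mul,
      mul_comm]
    intro g hg
    have hg' : (g : G ⧸ N) = q := by simpa using hg
    have hg1 : g ≠ 1 := by
      rintro rfl
      exact hq (by rw [← hg', QuotientGroup.mk_one])
    rw [← h g hg1, sumReps, Set.ncard_eq_toFinset_card']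
    congr 1
    ext p
    simp only [hF, Finset.mem_filter, Set.mem_toFinset, Set.mem_ofPred_eq]
    constructor
    · rintro ⟨⟨a, b, _⟩, d⟩
      exact ⟨a, b, d⟩
    · rintro ⟨a, b, d⟩
      exact ⟨⟨a, b, by rw [← QuotientGroup.mk_mul, d, hg']⟩, d⟩
  rw [← h1, Finset.card_eq_sum_card_fiberwise (f := fun p : G × G => (p.1 : G ⧸ N))
    (t := Finset.univ) (by simp)]
  refine Finset.sum_congr rfl fun r _ => ?_
  rw [cosetCount, cosetCount, Set.ncard_eq_toFinset_card', Set.ncard_eq_toFinset_card',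
    ← Finset.card_product]
  congr 1
  ext p
  simp only [hF, Finset.mem_product, Finset.mem_filter, Set.mem_toFinset, Set.mem_ofPred_eq]
  constructor
  · rintro ⟨⟨a, d⟩, b, c⟩
    exact ⟨⟨a, b, by rw [c, d]; group⟩, d⟩
  · rintro ⟨⟨a, b, c⟩, d⟩
    exact ⟨⟨a, d⟩, b, by rw [← c, ← d]; group⟩

theorem stmt_7 {G : Type*} [Group G] [Finite G] (N : Subgroup G) [N.Normal]
    (hidx : N.index = 3) (S : Set G) (mu : ℕ) (h : IsSumSet S mu)
    (hdist : ∀ α β : G ⧸ N, α ≠ β →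
      {s ∈ S | (s : G ⧸ N) = α}.ncard ≠ {s ∈ S | (s : G ⧸ N) = β}.ncard) :
    3 ∣ S.ncard ∧ (S ∩ (N : Set G)).ncard = S.ncard / 3 ∧
      ∃ x : ℤ, x ≠ 0 ∧
        (S.ncard : ℤ) ^ 2 - (mu : ℤ) * (Nat.card G : ℤ) = -3 * x ^ 2 := by
  classical
  have := Fintype.ofFinite (G ⧸ N)
  have hcard : Fintype.card (G ⧸ N) = 3 := by
    rw [← Nat.card_eq_fintype_card]; exact hidx
  have : Nontrivial (G ⧸ N) := Fintype.one_lt_card_iff_nontrivial.mp (by omega)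
  obtain ⟨q, hq⟩ := exists_ne (1 : G ⧸ N)
  have hq3 : q ^ 3 = 1 := by rw [← hcard]; exact pow_card_eq_one
  have hqi : q⁻¹ = q ^ 2 := inv_eq_of_mul_eq_one_right (by rw [← hq3]; group)
  have hqi2 : (q ^ 2)⁻¹ = q := by rw [← hqi, inv_inv]
  have hq2 : q ^ 2 ≠ 1 := by rw [← hqi]; simpa using hq
  have hqq : q ≠ q ^ 2 := by
    intro e
    apply hq
    have : q * 1 = q * q := by rw [mul_one, ← pow_two]; exact e
    exact (mul_left_cancel this).symm
  have hqq2 : q * q = q ^ 2 := (pow_two q).symm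
  have hq12 : q * q ^ 2 = 1 := by rw [← pow_succ', hq3]
  have hq4 : q ^ 2 * q ^ 2 = q := by rw [pow_two, mul_assoc, ← pow_two, hq12, mul_one]
  have huniv : (Finset.univ : Finset (G ⧸ N)) = {1, q, q ^ 2} := by
    symm
    apply Finset.eq_univ_of_card
    rw [hcard, Finset.card_eq_three]
    exact ⟨1, q, q ^ 2, hq.symm, hq2.symm, hqq, rfl⟩
  have hsum : ∀ f : G ⧸ N → ℕ, ∑ r, f r = f 1 + f q + f (q ^ 2) := by
    intro f
    rw [huniv, Finset.sum_insert (by simp [hq.symm, hq2.symm]), Finset.sum_pair hqq, add_assoc]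
  have hk := sum_cosetCount N S
  have e1 := sum_cosetCount_mul N S mu h q hq
  have e2 := sum_cosetCount_mul N S mu h (q ^ 2) hq2
  have hN : Nat.card N * 3 = Nat.card G := by rw [← hidx]; exact N.card_mul_index
  have hSN : (S ∩ (N : Set G)).ncard = cosetCount N S 1 := by
    rw [cosetCount]
    congr 1
    ext s
    simp [QuotientGroup.eq_one_iff]
  have d1 : cosetCount N S 1 ≠ cosetCount N S q := hdist _ _ hq.symm
  have d2 : cosetCount N S q ≠ cosetCount N S (q ^ 2) := hdist _ _ hqq
  rw [hsum] at hk e1 e2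
  simp only [inv_one, one_mul, inv_mul_cancel, hqi2, hqq2] at e1
  simp only [inv_one, one_mul, inv_mul_cancel, hqi, hq4] at e2
  rw [hSN]
  generalize cosetCount N S 1 = a at *
  generalize cosetCount N S q = b at *
  generalize cosetCount N S (q ^ 2) = c at *
  have hbc : b + c = 2 * a := by
    zify at e1 e2 d2 ⊢
    have : ((b : ℤ) - c) * (b + c - 2 * a) = 0 := by linear_combination e2 - e1
    rcases mul_eq_zero.mp this with h0 | h0
    · exact absurd (by linarith) d2
    · linarith
  refine ⟨by omega, by omega, (a : ℤ) - b, ?_, ?_⟩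
  · zify at d1
    exact sub_ne_zero.mpr d1
  · rw [← hk, ← hN]
    zify at e1 hbc
    have hc : (c : ℤ) = 2 * a - b := by linarith
    push_cast
    rw [hc] at e1 ⊢
    linear_combination 3 * e1
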